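/- Fix d in {(1,1),(0,1),(1,0)} and d' = (0,0). Suppose Assumption DID holds for d and for d', Assumption MAR holds, P(D = d | X) > 0 and P(D = d' | X) > 0 a.s., P(D = d, S = 1) > 0, P(D = d, S = 0) > 0, P(D = d', S = 1) > 0, and all displayed expectations are finite. Let g be a measurable function of X with g(X) = E[Y2(d) − Y2(d') | D = d, X] a.s. under the law of X given D = d. Then the complete-case difference-in-differences estimand satisfies E[S · 1{D = d}]^{-1} · E[S · 1{D = d} · (E[ΔY | D = d, S = 1, X] − E[ΔY | D = d', S = 1, X])] = τ_{dd'} + P(S = 0 | D = d) · (E[g(X) | D = d, S = 1] − E[g(X) | D = d, S = 0]). -/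

import Mathlib

open MeasureTheory Set
open scoped Classical

noncomputable section

namespace DIDMissing

variable {Ω : Type*} {𝓧 : Type*}

/-- Real-valued indicator of a set. -/
def ind (A : Set Ω) : Ω → ℝ := A.indicator fun _ => (1 : ℝ)

/-- All treatment paths `{0,1}²` (coded as reals). -/
def allPaths : Set (ℝ × ℝ) := {(0, 0), (0, 1), (1, 0), (1, 1)}

/-- The three treated paths `{(1,1), (0,1), (1,0)}`. -/
def threePaths : Set (ℝ × ℝ) := {(1, 1), (0, 1), (1, 0)}

/-- The event `{D = d}` for a treatment path `d = (d₁, d₂)`. -/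
def evD (D1 D2 : Ω → ℝ) (d : ℝ × ℝ) : Set Ω := {ω | D1 ω = d.1 ∧ D2 ω = d.2}

/-- The event `{D₂ = b}`. -/
def evD2 (D2 : Ω → ℝ) (b : ℝ) : Set Ω := {ω | D2 ω = b}

/-- `g` is a (measurable-in-the-covariate) version of the conditional mean `E[Z ∣ A, X]`:
for every bounded measurable `h`, `E[1_A · Z · h(X)] = E[1_A · g(X) · h(X)]`. -/
def IsCondMeanGiven [MeasurableSpace Ω] [MeasurableSpace 𝓧] (P : Measure Ω) (X : Ω → 𝓧)
    (A : Set Ω) (Z : Ω → ℝ) (g : 𝓧 → ℝ) : Prop :=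
  Measurable g ∧
    ∀ h : 𝓧 → ℝ, Measurable h → (∃ C, ∀ x, |h x| ≤ C) →
      ∫ ω, ind A ω * Z ω * h (X ω) ∂P = ∫ ω, ind A ω * g (X ω) * h (X ω) ∂P

/-- Assumption DID for a path `d` relative to `d' = (0,0)`:
(i) no anticipation, `E[Y₀(d) ∣ D = d, X] = E[Y₀(0,0) ∣ D = d, X]` a.s., stated in the
version-free integral form; and (ii) conditional parallel trends, stated as the existence
of a common version of `E[Y₂(0,0) − Y₀(0,0) ∣ X]` and `E[Y₂(0,0) − Y₀(0,0) ∣ D = d, X]`. -/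
def DID [MeasurableSpace Ω] [MeasurableSpace 𝓧] (P : Measure Ω) (X : Ω → 𝓧)
    (D1 D2 : Ω → ℝ) (Y0p Y2p : ℝ × ℝ → Ω → ℝ) (d : ℝ × ℝ) : Prop :=
  (∀ h : 𝓧 → ℝ, Measurable h → (∃ C, ∀ x, |h x| ≤ C) →
      ∫ ω, ind (evD D1 D2 d) ω * Y0p d ω * h (X ω) ∂P
        = ∫ ω, ind (evD D1 D2 d) ω * Y0p (0, 0) ω * h (X ω) ∂P) ∧
  (∃ tr : 𝓧 → ℝ,
      IsCondMeanGiven P X Set.univ (fun ω => Y2p (0, 0) ω - Y0p (0, 0) ω) tr ∧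
      IsCondMeanGiven P X (evD D1 D2 d) (fun ω => Y2p (0, 0) ω - Y0p (0, 0) ω) tr)

/-- Assumption MAR: `S ⟂ (D₁, ΔY) ∣ (D₂, X)`, where `q d₂` is a version of the
missing-data probability `P(S = 1 ∣ D₂ = d₂, X)`, which is `(0,1]`-valued a.s. -/
def MAR [MeasurableSpace Ω] [MeasurableSpace 𝓧] (P : Measure Ω) (X : Ω → 𝓧)
    (D1 D2 S Y0 Y2 : Ω → ℝ) (q : ℝ → 𝓧 → ℝ) : Prop :=
  (∀ d2 ∈ ({0, 1} : Set ℝ), IsCondMeanGiven P X (evD2 D2 d2) S (q d2)) ∧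
  (∀ d2 ∈ ({0, 1} : Set ℝ), ∀ᵐ ω ∂P, 0 < q d2 (X ω) ∧ q d2 (X ω) ≤ 1) ∧
  (∀ d2 ∈ ({0, 1} : Set ℝ), ∀ f : ℝ × ℝ → ℝ, Measurable f → (∃ C, ∀ p, |f p| ≤ C) →
      ∀ h : 𝓧 → ℝ, Measurable h → (∃ C, ∀ x, |h x| ≤ C) →
        ∫ ω, ind (evD2 D2 d2) ω * S ω * f (D1 ω, Y2 ω - Y0 ω) * h (X ω) ∂P
          = ∫ ω, ind (evD2 D2 d2) ω * q d2 (X ω) * f (D1 ω, Y2 ω - Y0 ω) * h (X ω) ∂P)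

/-- The path-dependent ATT `τ_{d,(0,0)} = E[Y₂(d) − Y₂(0,0) ∣ D = d]`. -/
def tau [MeasurableSpace Ω] (P : Measure Ω) (D1 D2 : Ω → ℝ)
    (Y2p : ℝ × ℝ → Ω → ℝ) (d : ℝ × ℝ) : ℝ :=
  (P (evD D1 D2 d)).toReal⁻¹ * ∫ ω in evD D1 D2 d, (Y2p d ω - Y2p (0, 0) ω) ∂P

/-!
By MAR, `P(S = 1 ∣ D = d, ΔY ∈ t, X)` is `q d₂` for every `t`, so restricting to the complete cases
multiplies the law of `(X, ΔY)` given `D = d` by a function of `X` alone and leaves the conditional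
mean of `ΔY` given `X` unchanged. By DID that mean is `tr + g` for the path `d` and `tr` for
`(0, 0)`, with the same trend `tr`; the second identity holds at almost every value of `X` because
`P(D = (0, 0) ∣ X)` and `q` are positive. The estimand is therefore the average of `g(X)` over
`{D = d, S = 1}`, while `τ` is its average over `{D = d}`, a mixture of the averages over
`{D = d, S = 1}` and `{D = d, S = 0}`.
-/

theorem abs_ind_le_one (A : Set Ω) (ω : Ω) : |ind A ω| ≤ 1 := by
  by_cases hω : ω ∈ A <;> simp [ind, hω]

theorem ind_inter (A B : Set Ω) (ω : Ω) : ind (A ∩ B) ω = ind A ω * ind B ω :=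
  congrFun inter_indicator_one ω

theorem eq_ind_of_forall_eq_zero_or_one {S : Ω → ℝ} (hSv : ∀ ω, S ω = 0 ∨ S ω = 1) :
    S = ind {ω | S ω = 1} := by
  ext ω
  rcases hSv ω with h | h <;> simp [ind, h]

theorem measurable_ind [MeasurableSpace Ω] {A : Set Ω} (hA : MeasurableSet A) :
    Measurable (ind A) :=
  measurable_const.indicator hA

theorem eqOn_evD_of_consistency {D1 D2 Y : Ω → ℝ} {Yp : ℝ × ℝ → Ω → ℝ} {d : ℝ × ℝ}
    (hcons : ∀ ω, Y ω = Yp (D1 ω, D2 ω) ω) : EqOn Y (Yp d) (evD D1 D2 d) :=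
  fun ω hω => by rw [hcons, hω.1, hω.2]

theorem integral_ind_mul [MeasurableSpace Ω] {P : Measure Ω} {A : Set Ω} (hA : MeasurableSet A)
    (f : Ω → ℝ) : ∫ ω, ind A ω * f ω ∂P = ∫ ω in A, f ω ∂P := by
  rw [← integral_indicator hA]
  congr with ω
  simp [ind, indicator_apply]

theorem setAverage_eq_setAverage_union_add [MeasurableSpace Ω] {μ : Measure Ω} [IsFiniteMeasure μ]
    {E : Type*} [NormedAddCommGroup E] [NormedSpace ℝ E] {s t : Set Ω} (hst : Disjoint s t)
    (ht : MeasurableSet t) (hs : μ s ≠ 0) {f : Ω → E} (hf : IntegrableOn f (s ∪ t) μ) :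
    ⨍ ω in s, f ω ∂μ = ⨍ ω in s ∪ t, f ω ∂μ
      + (μ.real t / μ.real (s ∪ t)) • (⨍ ω in s, f ω ∂μ - ⨍ ω in t, f ω ∂μ) := by
  have hpos : 0 < μ.real s + μ.real t :=
    add_pos_of_pos_of_nonneg (ENNReal.toReal_pos hs (measure_ne_top _ _)) measureReal_nonneg
  rw [average_union hst.aedisjoint ht.nullMeasurableSet (measure_ne_top _ _) (measure_ne_top _ _)
    (hf.mono_set subset_union_left) (hf.mono_set subset_union_right), measureReal_union hst ht]
  match_scalars <;> field_simp
  ring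

section CondMean

variable [MeasurableSpace Ω] [MeasurableSpace 𝓧] {P : Measure Ω} {X : Ω → 𝓧} {A B : Set Ω}
  {Z Z₁ Z₂ : Ω → ℝ} {g g₁ g₂ : 𝓧 → ℝ}

theorem isCondMeanGiven_iff_setIntegral (hA : MeasurableSet A) :
    IsCondMeanGiven P X A Z g ↔ Measurable g ∧
      ∀ h : 𝓧 → ℝ, Measurable h → (∃ C, ∀ x, |h x| ≤ C) →
        ∫ ω in A, Z ω * h (X ω) ∂P = ∫ ω in A, g (X ω) * h (X ω) ∂P := by
  simp only [IsCondMeanGiven, mul_assoc, integral_ind_mul hA]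

theorem IsCondMeanGiven.setIntegral_inter_preimage (hg : IsCondMeanGiven P X A Z g)
    (hX : Measurable X) (hA : MeasurableSet A) {s : Set 𝓧} (hs : MeasurableSet s) :
    ∫ ω in A ∩ X ⁻¹' s, Z ω ∂P = ∫ ω in A ∩ X ⁻¹' s, g (X ω) ∂P := by
  have hind : ∀ f : Ω → ℝ, ∫ ω in A, f ω * ind s (X ω) ∂P = ∫ ω in A ∩ X ⁻¹' s, f ω ∂P := by
    intro f
    rw [← setIntegral_indicator (hX hs)]
    congr with ω
    simp [ind, indicator_apply]
  simpa only [hind] using ((isCondMeanGiven_iff_setIntegral hA).1 hg).2 (ind s)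
    (measurable_ind hs) ⟨1, abs_ind_le_one s⟩

theorem IsCondMeanGiven.setIntegral_eq (hg : IsCondMeanGiven P X A Z g) (hA : MeasurableSet A) :
    ∫ ω in A, Z ω ∂P = ∫ ω in A, g (X ω) ∂P := by
  simpa using ((isCondMeanGiven_iff_setIntegral hA).1 hg).2 (fun _ => 1) measurable_const
    ⟨1, by simp⟩

theorem IsCondMeanGiven.congr (hg : IsCondMeanGiven P X A Z₁ g) (hA : MeasurableSet A)
    (hZ : EqOn Z₁ Z₂ A) : IsCondMeanGiven P X A Z₂ g := by
  rw [isCondMeanGiven_iff_setIntegral hA] at hg ⊢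
  refine ⟨hg.1, fun h hh hb => ?_⟩
  rw [← hg.2 h hh hb]
  exact setIntegral_congr_fun hA fun ω hω => by simp only [hZ hω]

theorem IsCondMeanGiven.congr_ae (hg : IsCondMeanGiven P X A Z g₁) (hA : MeasurableSet A)
    (hg₂ : Measurable g₂) (h : ∀ᵐ ω ∂P.restrict A, g₁ (X ω) = g₂ (X ω)) :
    IsCondMeanGiven P X A Z g₂ := by
  rw [isCondMeanGiven_iff_setIntegral hA] at hg ⊢
  refine ⟨hg₂, fun k hk hb => (hg.2 k hk hb).trans (integral_congr_ae ?_)⟩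
  filter_upwards [h] with ω hω
  rw [hω]

variable [IsFiniteMeasure P]

theorem setIntegral_mul_of_ae_eq_condExp (hX : Measurable X) (hZ : IntegrableOn Z A P)
    (hg : g ∘ X =ᵐ[P.restrict A] (P.restrict A)[Z | MeasurableSpace.comap X inferInstance])
    {k : 𝓧 → ℝ} (hk : Measurable k) (hZk : IntegrableOn (fun ω => Z ω * k (X ω)) A P) :
    ∫ ω in A, Z ω * k (X ω) ∂P = ∫ ω in A, g (X ω) * k (X ω) ∂P := by
  have hpull := condExp_mul_of_stronglyMeasurable_right
    (hk.comp (comap_measurable X)).stronglyMeasurable hZk hZ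
  rw [← integral_condExp hX.comap_le]
  exact integral_congr_ae (hpull.trans (hg.symm.mul .rfl))

-- Integrability of `g ∘ X` is not part of `IsCondMeanGiven`, so the uniqueness of conditional
-- expectations is applied on the events `|g (X ω)| ≤ n`.
theorem IsCondMeanGiven.ae_eq_condExp (hg : IsCondMeanGiven P X A Z g) (hX : Measurable X)
    (hA : MeasurableSet A) (hZ : IntegrableOn Z A P) :
    g ∘ X =ᵐ[P.restrict A] (P.restrict A)[Z | MeasurableSpace.comap X inferInstance] := by
  let s : ℕ → Set 𝓧 := fun n => {x | |g x| ≤ n}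
  have hs : ∀ n, MeasurableSet (s n) := fun n => measurableSet_le hg.1.abs measurable_const
  have htrunc : ∀ n, (X ⁻¹' s n).indicator (g ∘ X) =ᵐ[P.restrict A]
      (X ⁻¹' s n).indicator ((P.restrict A)[Z | MeasurableSpace.comap X inferInstance]) := by
    intro n
    have hmeas : Measurable ((s n).indicator g) := hg.1.indicator (hs n)
    have hbdd : ∀ x, ‖(s n).indicator g x‖ ≤ n := fun x => by
      by_cases hx : x ∈ s n
      · rw [indicator_of_mem hx]; exact hx
      · simp [hx]
    have hint : Integrable ((X ⁻¹' s n).indicator (g ∘ X)) (P.restrict A) :=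
      .of_bound (hmeas.comp hX).aestronglyMeasurable n (ae_of_all _ fun ω => hbdd (X ω))
    refine (ae_eq_condExp_of_forall_setIntegral_eq hX.comap_le (hZ.indicator (hX (hs n)))
      (fun _ _ _ => hint.integrableOn) ?_
      (hmeas.comp (comap_measurable X)).aestronglyMeasurable).trans
      (condExp_indicator hZ ⟨s n, hs n, rfl⟩)
    rintro _ ⟨t, ht, rfl⟩ -
    rw [setIntegral_indicator (hX (hs n)), setIntegral_indicator (hX (hs n)), ← preimage_inter,
      Measure.restrict_restrict (hX (ht.inter (hs n))), inter_comm]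
    exact (hg.setIntegral_inter_preimage hX hA (ht.inter (hs n))).symm
  filter_upwards [ae_all_iff.2 htrunc] with ω hω
  obtain ⟨n, hn⟩ := exists_nat_ge |g (X ω)|
  have hmem : ω ∈ X ⁻¹' s n := hn
  simpa only [indicator_of_mem hmem] using hω n

theorem isCondMeanGiven_iff_ae_eq_condExp (hX : Measurable X) (hA : MeasurableSet A)
    (hZ : IntegrableOn Z A P) :
    IsCondMeanGiven P X A Z g ↔ Measurable g ∧
      g ∘ X =ᵐ[P.restrict A] (P.restrict A)[Z | MeasurableSpace.comap X inferInstance] := by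
  refine ⟨fun hg => ⟨hg.1, hg.ae_eq_condExp hX hA hZ⟩, fun ⟨hgm, hg⟩ => ?_⟩
  refine (isCondMeanGiven_iff_setIntegral hA).2 ⟨hgm, fun h hh ⟨C, hC⟩ => ?_⟩
  exact setIntegral_mul_of_ae_eq_condExp hX hZ hg hh
    (hZ.mul_bdd (hh.comp hX).aestronglyMeasurable (ae_of_all _ fun ω => hC (X ω)))

theorem IsCondMeanGiven.integrableOn (hg : IsCondMeanGiven P X A Z g) (hX : Measurable X)
    (hA : MeasurableSet A) (hZ : IntegrableOn Z A P) : IntegrableOn (fun ω => g (X ω)) A P :=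
  integrable_condExp.congr (hg.ae_eq_condExp hX hA hZ).symm

theorem IsCondMeanGiven.ae_eq (hg₁ : IsCondMeanGiven P X A Z g₁)
    (hg₂ : IsCondMeanGiven P X A Z g₂) (hX : Measurable X) (hA : MeasurableSet A)
    (hZ : IntegrableOn Z A P) : ∀ᵐ ω ∂P.restrict A, g₁ (X ω) = g₂ (X ω) :=
  (hg₁.ae_eq_condExp hX hA hZ).trans (hg₂.ae_eq_condExp hX hA hZ).symm

theorem IsCondMeanGiven.add (hg₁ : IsCondMeanGiven P X A Z₁ g₁)
    (hg₂ : IsCondMeanGiven P X A Z₂ g₂) (hX : Measurable X) (hA : MeasurableSet A)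
    (hZ₁ : IntegrableOn Z₁ A P) (hZ₂ : IntegrableOn Z₂ A P) :
    IsCondMeanGiven P X A (Z₁ + Z₂) (g₁ + g₂) :=
  (isCondMeanGiven_iff_ae_eq_condExp hX hA (hZ₁.add hZ₂)).2 ⟨hg₁.1.add hg₂.1,
    ((hg₁.ae_eq_condExp hX hA hZ₁).add (hg₂.ae_eq_condExp hX hA hZ₂)).trans
      (condExp_add hZ₁ hZ₂ _).symm⟩

theorem IsCondMeanGiven.setIntegral_mul (hg : IsCondMeanGiven P X A Z g) (hX : Measurable X)
    (hA : MeasurableSet A) (hZ : IntegrableOn Z A P) {k : 𝓧 → ℝ} (hk : Measurable k)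
    (hZk : IntegrableOn (fun ω => Z ω * k (X ω)) A P) :
    ∫ ω in A, Z ω * k (X ω) ∂P = ∫ ω in A, g (X ω) * k (X ω) ∂P :=
  setIntegral_mul_of_ae_eq_condExp hX hZ (hg.ae_eq_condExp hX hA hZ) hk hZk

theorem IsCondMeanGiven.measure_inter_preimage {C : Set Ω} {p : 𝓧 → ℝ}
    (hp : IsCondMeanGiven P X A (ind C) p) (hX : Measurable X) (hA : MeasurableSet A)
    (hC : MeasurableSet C) (hp0 : ∀ᵐ ω ∂P.restrict A, 0 ≤ p (X ω)) {s : Set 𝓧}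
    (hs : MeasurableSet s) :
    P (A ∩ X ⁻¹' s ∩ C) = ∫⁻ ω in A ∩ X ⁻¹' s, ENNReal.ofReal (p (X ω)) ∂P := by
  have hsub : A ∩ X ⁻¹' s ⊆ A := inter_subset_left
  have hint : IntegrableOn (ind C) A P := (integrable_const 1).indicator hC
  rw [← ofReal_integral_eq_lintegral_ofReal ((hp.integrableOn hX hA hint).mono_set hsub)
    (ae_restrict_of_ae_restrict_of_subset hsub hp0), ← hp.setIntegral_inter_preimage hX hA hs, ind,
    setIntegral_indicator hC, ofReal_setIntegral_one]

theorem IsCondMeanGiven.map_restrict_absolutelyContinuous {C : Set Ω} {p : 𝓧 → ℝ}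
    (hp : IsCondMeanGiven P X A (ind C) p) (hX : Measurable X) (hA : MeasurableSet A)
    (hC : MeasurableSet C) (hpos : ∀ᵐ ω ∂P.restrict A, 0 < p (X ω)) :
    (P.restrict A).map X ≪ (P.restrict (A ∩ C)).map X := by
  refine .mk fun s hs h0 => ?_
  have hAs : MeasurableSet (A ∩ X ⁻¹' s) := hA.inter (hX hs)
  rw [Measure.map_apply hX hs, Measure.restrict_apply (hX hs), inter_comm] at h0 ⊢
  have hpm : Measurable fun ω => ENNReal.ofReal (p (X ω)) := (hp.1.comp hX).ennreal_ofReal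
  rw [inter_right_comm, hp.measure_inter_preimage hX hA hC (hpos.mono fun _ => le_of_lt) hs,
    setLIntegral_eq_zero_iff hAs hpm] at h0
  rw [measure_eq_zero_iff_ae_notMem]
  filter_upwards [h0, (ae_restrict_iff' hA).1 hpos] with ω h hω hmem
  exact (ENNReal.ofReal_pos.2 (hω hmem.1)).ne' (h hmem)

theorem map_restrict_inter_eq_map_withDensity {β : Type*} [MeasurableSpace β] {U : Ω → β}
    {C : Set Ω} {p : 𝓧 → ℝ} (hX : Measurable X) (hU : Measurable U) (hA : MeasurableSet A)
    (hC : MeasurableSet C)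
    (hp : ∀ t, MeasurableSet t → IsCondMeanGiven P X (A ∩ U ⁻¹' t) (ind C) p)
    (hp0 : ∀ᵐ ω ∂P.restrict A, 0 ≤ p (X ω)) :
    (P.restrict (A ∩ C)).map (fun ω => (X ω, U ω))
      = ((P.restrict A).withDensity fun ω => ENNReal.ofReal (p (X ω))).map
        fun ω => (X ω, U ω) := by
  refine Measure.ext_prod fun {s t} hs ht => ?_
  have hXU : Measurable fun ω => (X ω, U ω) := hX.prodMk hU
  have hst := hs.prod ht
  rw [Measure.map_apply hXU hst, Measure.map_apply hXU hst, Measure.restrict_apply (hXU hst),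
    withDensity_apply _ (hXU hst), Measure.restrict_restrict (hXU hst)]
  have hpre : (fun ω => (X ω, U ω)) ⁻¹' s ×ˢ t ∩ A = A ∩ U ⁻¹' t ∩ X ⁻¹' s := by
    ext ω; simp only [mem_inter_iff, mem_preimage, mem_prod]; tauto
  rw [← inter_assoc, hpre]
  exact (hp t ht).measure_inter_preimage hX (hA.inter (hU ht)) hC
    (ae_restrict_of_ae_restrict_of_subset inter_subset_left hp0) hs

-- The density of the law of `(X, Z)` on `B` with respect to `A` depends on `X` only, so it can be
-- absorbed in the test function.
theorem IsCondMeanGiven.of_map_eq_map_withDensity {q : 𝓧 → ℝ} (hg : IsCondMeanGiven P X A Z g)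
    (hX : Measurable X) (hZ : Measurable Z) (hA : MeasurableSet A) (hB : MeasurableSet B)
    (hZA : IntegrableOn Z A P) (hq : Measurable q) {C : ℝ}
    (hqC : ∀ᵐ ω ∂P.restrict A, 0 ≤ q (X ω) ∧ q (X ω) ≤ C)
    (hlaw : (P.restrict B).map (fun ω => (X ω, Z ω))
      = ((P.restrict A).withDensity fun ω => ENNReal.ofReal (q (X ω))).map
        fun ω => (X ω, Z ω)) :
    IsCondMeanGiven P X B Z g := by
  have hXZ : Measurable fun ω => (X ω, Z ω) := hX.prodMk hZ
  have hqm : Measurable fun ω => ENNReal.ofReal (q (X ω)) := (hq.comp hX).ennreal_ofReal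
  have hreweight : ∀ φ : 𝓧 × ℝ → ℝ, Measurable φ →
      ∫ ω in B, φ (X ω, Z ω) ∂P = ∫ ω in A, φ (X ω, Z ω) * q (X ω) ∂P := by
    intro φ hφ
    rw [← integral_map hXZ.aemeasurable hφ.aestronglyMeasurable, hlaw,
      integral_map hXZ.aemeasurable hφ.aestronglyMeasurable,
      integral_withDensity_eq_integral_toReal_smul hqm
        (ae_of_all _ fun _ => ENNReal.ofReal_lt_top)]
    refine integral_congr_ae ?_
    filter_upwards [hqC] with ω hω
    rw [ENNReal.toReal_ofReal hω.1, smul_eq_mul, mul_comm]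
  refine (isCondMeanGiven_iff_setIntegral hB).2 ⟨hg.1, fun h hh ⟨K, hK⟩ => ?_⟩
  have hint : IntegrableOn (fun ω => Z ω * (h (X ω) * q (X ω))) A P := by
    refine hZA.mul_bdd (c := K * C) ((hh.mul hq).comp hX).aestronglyMeasurable ?_
    filter_upwards [hqC] with ω hω
    rw [norm_mul, Real.norm_of_nonneg hω.1]
    exact mul_le_mul (hK _) hω.2 hω.1 ((abs_nonneg _).trans (hK (X ω)))
  calc ∫ ω in B, Z ω * h (X ω) ∂P
      = ∫ ω in A, Z ω * h (X ω) * q (X ω) ∂P :=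
        hreweight (fun p => p.2 * h p.1) (measurable_snd.mul (hh.comp measurable_fst))
    _ = ∫ ω in A, Z ω * (h (X ω) * q (X ω)) ∂P := by simp only [mul_assoc]
    _ = ∫ ω in A, g (X ω) * (h (X ω) * q (X ω)) ∂P := hg.setIntegral_mul hX hA hZA (hh.mul hq) hint
    _ = ∫ ω in A, g (X ω) * h (X ω) * q (X ω) ∂P := by simp only [mul_assoc]
    _ = ∫ ω in B, g (X ω) * h (X ω) ∂P :=
        (hreweight (fun p => g p.1 * h p.1)
          ((hg.1.comp measurable_fst).mul (hh.comp measurable_fst))).symm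

end CondMean

section CompleteCase

variable [MeasurableSpace Ω] [MeasurableSpace 𝓧] {P : Measure Ω} {X : Ω → 𝓧}
  {A : Set Ω} {Y0 Y2 D1 D2 S : Ω → ℝ} {Y0p Y2p : ℝ × ℝ → Ω → ℝ} {d : ℝ × ℝ} {q : ℝ → 𝓧 → ℝ}

theorem measurableSet_evD (hD1 : Measurable D1) (hD2 : Measurable D2) :
    MeasurableSet (evD D1 D2 d) :=
  (hD1 (measurableSet_singleton d.1)).inter (hD2 (measurableSet_singleton d.2))

theorem MAR.isCondMeanGiven_evD_inter (hMAR : MAR P X D1 D2 S Y0 Y2 q)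
    (hd2 : d.2 ∈ ({0, 1} : Set ℝ)) {t : Set ℝ} (ht : MeasurableSet t) :
    IsCondMeanGiven P X (evD D1 D2 d ∩ (fun ω => Y2 ω - Y0 ω) ⁻¹' t) S (q d.2) := by
  have hevent : evD D1 D2 d ∩ (fun ω => Y2 ω - Y0 ω) ⁻¹' t
      = evD2 D2 d.2 ∩ (fun ω => (D1 ω, Y2 ω - Y0 ω)) ⁻¹' ({d.1} ×ˢ t) := by
    ext ω
    simp only [evD, evD2, mem_inter_iff, mem_preimage, mem_prod, mem_singleton_iff, mem_ofPred_eq]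
    tauto
  have hind : ∀ ω, ind (evD D1 D2 d ∩ (fun ω => Y2 ω - Y0 ω) ⁻¹' t) ω
      = ind (evD2 D2 d.2) ω * ind ({d.1} ×ˢ t) (D1 ω, Y2 ω - Y0 ω) := fun ω => by
    rw [hevent, ind_inter]
    rfl
  refine ⟨(hMAR.1 d.2 hd2).1, fun h hh hb => ?_⟩
  simpa only [hind, mul_right_comm] using hMAR.2.2 d.2 hd2 _
    (measurable_ind ((measurableSet_singleton d.1).prod ht)) ⟨1, abs_ind_le_one _⟩ h hh hb

theorem MAR.isCondMeanGiven_evD (hMAR : MAR P X D1 D2 S Y0 Y2 q)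
    (hd2 : d.2 ∈ ({0, 1} : Set ℝ)) : IsCondMeanGiven P X (evD D1 D2 d) S (q d.2) := by
  simpa only [preimage_univ, inter_univ] using
    hMAR.isCondMeanGiven_evD_inter (d := d) hd2 MeasurableSet.univ

theorem integral_mul_ind_mul (hS : Measurable S) (hSv : ∀ ω, S ω = 0 ∨ S ω = 1)
    (hA : MeasurableSet A) (f : Ω → ℝ) :
    ∫ ω, S ω * ind A ω * f ω ∂P = ∫ ω in A ∩ {ω | S ω = 1}, f ω ∂P := by
  have hS1 : MeasurableSet {ω | S ω = 1} := hS (measurableSet_singleton 1)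
  rw [← integral_ind_mul (hA.inter hS1)]
  congr with ω
  rw [ind_inter, ← eq_ind_of_forall_eq_zero_or_one hSv, mul_comm (S ω)]

theorem inv_mul_completeCase_integral (hS : Measurable S) (hSv : ∀ ω, S ω = 0 ∨ S ω = 1)
    (hA : MeasurableSet A) (f : Ω → ℝ) :
    (∫ ω, S ω * ind A ω ∂P)⁻¹ * ∫ ω, S ω * ind A ω * f ω ∂P
      = ⨍ ω in A ∩ {ω | S ω = 1}, f ω ∂P := by
  have hmass := integral_mul_ind_mul (P := P) hS hSv hA fun _ => 1
  simp only [mul_one, setIntegral_one_eq_measureReal] at hmass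
  rw [hmass, integral_mul_ind_mul hS hSv hA, setAverage_eq, smul_eq_mul]

variable [IsFiniteMeasure P]

theorem MAR.isCondMeanGiven_completeCase (hMAR : MAR P X D1 D2 S Y0 Y2 q) (hX : Measurable X)
    (hY0 : Measurable Y0) (hY2 : Measurable Y2) (hD1 : Measurable D1) (hD2 : Measurable D2)
    (hS : Measurable S) (hSv : ∀ ω, S ω = 0 ∨ S ω = 1) (hY0i : Integrable Y0 P)
    (hY2i : Integrable Y2 P) (hd2 : d.2 ∈ ({0, 1} : Set ℝ)) {m : 𝓧 → ℝ}
    (hm : IsCondMeanGiven P X (evD D1 D2 d) (fun ω => Y2 ω - Y0 ω) m) :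
    IsCondMeanGiven P X (evD D1 D2 d ∩ {ω | S ω = 1}) (fun ω => Y2 ω - Y0 ω) m := by
  have hA : MeasurableSet (evD D1 D2 d) := measurableSet_evD hD1 hD2
  have hS1 : MeasurableSet {ω | S ω = 1} := hS (measurableSet_singleton 1)
  have hq := ae_restrict_of_ae (s := evD D1 D2 d) (hMAR.2.1 d.2 hd2)
  refine hm.of_map_eq_map_withDensity hX (hY2.sub hY0) hA (hA.inter hS1)
    (hY2i.sub hY0i).integrableOn (hMAR.1 d.2 hd2).1 (C := 1)
    (hq.mono fun _ h => ⟨h.1.le, h.2⟩) ?_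
  refine map_restrict_inter_eq_map_withDensity hX (hY2.sub hY0) hA hS1 (fun t ht => ?_)
    (hq.mono fun _ h => h.1.le)
  rw [← eq_ind_of_forall_eq_zero_or_one hSv]
  exact hMAR.isCondMeanGiven_evD_inter hd2 ht

theorem MAR.ae_of_ae_completeCase (hMAR : MAR P X D1 D2 S Y0 Y2 q)
    (hX : Measurable X) (hD1 : Measurable D1) (hD2 : Measurable D2) (hS : Measurable S)
    (hSv : ∀ ω, S ω = 0 ∨ S ω = 1) (hd2 : d.2 ∈ ({0, 1} : Set ℝ)) {p : 𝓧 → ℝ}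
    (hp : IsCondMeanGiven P X univ (ind (evD D1 D2 d)) p) (hpos : ∀ᵐ ω ∂P, 0 < p (X ω))
    {r : 𝓧 → Prop} (hr : MeasurableSet {x | r x})
    (h : ∀ᵐ ω ∂P.restrict (evD D1 D2 d ∩ {ω | S ω = 1}), r (X ω)) : ∀ᵐ ω ∂P, r (X ω) := by
  have hA : MeasurableSet (evD D1 D2 d) := measurableSet_evD hD1 hD2
  have hS1 : MeasurableSet {ω | S ω = 1} := hS (measurableSet_singleton 1)
  have hpath : P.map X ≪ (P.restrict (evD D1 D2 d)).map X := by
    simpa only [Measure.restrict_univ, univ_inter] using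
      hp.map_restrict_absolutelyContinuous hX MeasurableSet.univ hA (ae_restrict_of_ae hpos)
  have hobserved : IsCondMeanGiven P X (evD D1 D2 d) (ind {ω | S ω = 1}) (q d.2) :=
    eq_ind_of_forall_eq_zero_or_one hSv ▸ hMAR.isCondMeanGiven_evD hd2
  have hcase := hobserved.map_restrict_absolutelyContinuous hX hA hS1
    (ae_restrict_of_ae ((hMAR.2.1 d.2 hd2).mono fun _ h => h.1))
  exact (ae_map_iff hX.aemeasurable hr).1
    ((hpath.trans hcase).ae_le ((ae_map_iff hX.aemeasurable hr).2 h))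

theorem DID.isCondMeanGiven_trend (hDID : DID P X D1 D2 Y0p Y2p d) (hX : Measurable X)
    (hD1 : Measurable D1) (hD2 : Measurable D2) (hY0p : Integrable (Y0p (0, 0)) P)
    (hY2p : Integrable (Y2p (0, 0)) P) {tr : 𝓧 → ℝ}
    (htr : IsCondMeanGiven P X univ (fun ω => Y2p (0, 0) ω - Y0p (0, 0) ω) tr) :
    IsCondMeanGiven P X (evD D1 D2 d) (fun ω => Y2p (0, 0) ω - Y0p (0, 0) ω) tr := by
  obtain ⟨-, tr', htr', hA⟩ := hDID
  have hae := htr'.ae_eq htr hX MeasurableSet.univ (hY2p.sub hY0p).integrableOn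
  rw [Measure.restrict_univ] at hae
  exact hA.congr_ae (measurableSet_evD hD1 hD2) htr.1 (ae_restrict_of_ae hae)

theorem DID.isCondMeanGiven_sub (hDID : DID P X D1 D2 Y0p Y2p d) (hX : Measurable X)
    (hD1 : Measurable D1) (hD2 : Measurable D2) (hY0i : Integrable Y0 P) (hY2i : Integrable Y2 P)
    (hcons0 : ∀ ω, Y0 ω = Y0p (D1 ω, D2 ω) ω) (hcons2 : ∀ ω, Y2 ω = Y2p (D1 ω, D2 ω) ω)
    (hY0p : Integrable (Y0p (0, 0)) P) (hY2p : Integrable (Y2p (0, 0)) P) {tr g : 𝓧 → ℝ}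
    (htr : IsCondMeanGiven P X univ (fun ω => Y2p (0, 0) ω - Y0p (0, 0) ω) tr)
    (hg : IsCondMeanGiven P X (evD D1 D2 d) (fun ω => Y2p d ω - Y2p (0, 0) ω) g) :
    IsCondMeanGiven P X (evD D1 D2 d) (fun ω => Y2 ω - Y0 ω) (tr + g) := by
  have hA : MeasurableSet (evD D1 D2 d) := measurableSet_evD hD1 hD2
  have hY0d : EqOn Y0 (Y0p d) (evD D1 D2 d) := eqOn_evD_of_consistency hcons0
  have hY2d : EqOn Y2 (Y2p d) (evD D1 D2 d) := eqOn_evD_of_consistency hcons2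
  have hY0di : IntegrableOn (Y0p d) (evD D1 D2 d) P := hY0i.integrableOn.congr_fun hY0d hA
  have hY2di : IntegrableOn (Y2p d) (evD D1 D2 d) P := hY2i.integrableOn.congr_fun hY2d hA
  have hanticipation : IsCondMeanGiven P X (evD D1 D2 d) (fun ω => Y0p (0, 0) ω - Y0p d ω) 0 := by
    refine (isCondMeanGiven_iff_setIntegral hA).2 ⟨measurable_zero, fun h hh ⟨C, hC⟩ => ?_⟩
    have hmul : ∀ {f : Ω → ℝ}, IntegrableOn f (evD D1 D2 d) P →
        IntegrableOn (fun ω => f ω * h (X ω)) (evD D1 D2 d) P := fun hf =>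
      hf.mul_bdd (hh.comp hX).aestronglyMeasurable (ae_of_all _ fun ω => hC (X ω))
    have hna := hDID.1 h hh ⟨C, hC⟩
    simp only [mul_assoc, integral_ind_mul hA] at hna
    simp only [sub_mul, Pi.zero_apply, zero_mul, integral_zero]
    rw [integral_sub (hmul hY0p.integrableOn) (hmul hY0di), hna, sub_self]
  have hsum := ((hDID.isCondMeanGiven_trend hX hD1 hD2 hY0p hY2p htr).add hg hX hA
    (hY2p.sub hY0p).integrableOn (hY2di.sub hY2p.integrableOn)).add hanticipation hX hA
    ((hY2p.sub hY0p).integrableOn.add (hY2di.sub hY2p.integrableOn))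
    (hY0p.integrableOn.sub hY0di)
  rw [add_zero] at hsum
  refine hsum.congr hA fun ω hω => ?_
  simp only [Pi.add_apply, hY0d hω, hY2d hω]
  ring

theorem ae_completeCase_condMean_eq (hX : Measurable X) (hY0 : Measurable Y0)
    (hY2 : Measurable Y2) (hD1 : Measurable D1) (hD2 : Measurable D2) (hS : Measurable S)
    (hSv : ∀ ω, S ω = 0 ∨ S ω = 1) (hY0i : Integrable Y0 P) (hY2i : Integrable Y2 P)
    (hcons0 : ∀ ω, Y0 ω = Y0p (D1 ω, D2 ω) ω) (hcons2 : ∀ ω, Y2 ω = Y2p (D1 ω, D2 ω) ω)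
    (hY0p : Integrable (Y0p (0, 0)) P) (hY2p : Integrable (Y2p (0, 0)) P)
    (hd2 : d.2 ∈ ({0, 1} : Set ℝ)) (hDID : DID P X D1 D2 Y0p Y2p d)
    (hMAR : MAR P X D1 D2 S Y0 Y2 q) {tr g mS : 𝓧 → ℝ}
    (htr : IsCondMeanGiven P X univ (fun ω => Y2p (0, 0) ω - Y0p (0, 0) ω) tr)
    (hg : IsCondMeanGiven P X (evD D1 D2 d) (fun ω => Y2p d ω - Y2p (0, 0) ω) g)
    (hmS : IsCondMeanGiven P X (evD D1 D2 d ∩ {ω | S ω = 1}) (fun ω => Y2 ω - Y0 ω) mS) :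
    ∀ᵐ ω ∂P.restrict (evD D1 D2 d ∩ {ω | S ω = 1}), mS (X ω) = tr (X ω) + g (X ω) :=
  hmS.ae_eq
    (hMAR.isCondMeanGiven_completeCase hX hY0 hY2 hD1 hD2 hS hSv hY0i hY2i hd2
      (hDID.isCondMeanGiven_sub hX hD1 hD2 hY0i hY2i hcons0 hcons2 hY0p hY2p htr hg))
    hX ((measurableSet_evD hD1 hD2).inter (hS (measurableSet_singleton 1)))
    (hY2i.sub hY0i).integrableOn

theorem completeCase_setAverage_eq_tau_add (hX : Measurable X)
    (hD1 : Measurable D1) (hD2 : Measurable D2) (hS : Measurable S)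
    (hSv : ∀ ω, S ω = 0 ∨ S ω = 1)
    (hint : IntegrableOn (fun ω => Y2p d ω - Y2p (0, 0) ω) (evD D1 D2 d) P)
    (hdS1 : 0 < P (evD D1 D2 d ∩ {ω | S ω = 1})) {g : 𝓧 → ℝ}
    (hg : IsCondMeanGiven P X (evD D1 D2 d) (fun ω => Y2p d ω - Y2p (0, 0) ω) g) :
    ⨍ ω in evD D1 D2 d ∩ {ω | S ω = 1}, g (X ω) ∂P
      = tau P D1 D2 Y2p d
        + (P (evD D1 D2 d ∩ {ω | S ω = 0})).toReal / (P (evD D1 D2 d)).toReal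
          * (⨍ ω in evD D1 D2 d ∩ {ω | S ω = 1}, g (X ω) ∂P
              - ⨍ ω in evD D1 D2 d ∩ {ω | S ω = 0}, g (X ω) ∂P) := by
  have hA : MeasurableSet (evD D1 D2 d) := measurableSet_evD hD1 hD2
  have hunion : evD D1 D2 d ∩ {ω | S ω = 1} ∪ evD D1 D2 d ∩ {ω | S ω = 0} = evD D1 D2 d := by
    rw [← inter_union_distrib_left, inter_eq_left]
    exact fun ω _ => (hSv ω).symm
  have hdisj : Disjoint (evD D1 D2 d ∩ {ω | S ω = 1}) (evD D1 D2 d ∩ {ω | S ω = 0}) :=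
    disjoint_left.2 fun ω h1 h0 => one_ne_zero (h1.2.symm.trans h0.2)
  have htau : tau P D1 D2 Y2p d = ⨍ ω in evD D1 D2 d, g (X ω) ∂P := by
    rw [setAverage_eq, ← hg.setIntegral_eq hA]
    rfl
  rw [htau]
  have hgi : IntegrableOn (fun ω => g (X ω)) (evD D1 D2 d) P := hg.integrableOn hX hA hint
  rw [← hunion] at hgi
  have hpartition := setAverage_eq_setAverage_union_add hdisj
    (hA.inter (hS (measurableSet_singleton 0))) hdS1.ne' hgi
  rwa [hunion] at hpartition

end CompleteCase

theorem statement_1_general [MeasurableSpace Ω] [MeasurableSpace 𝓧] (P : Measure Ω)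
    [IsFiniteMeasure P] (X : Ω → 𝓧) (hX : Measurable X) (Y0 Y2 D1 D2 S : Ω → ℝ)
    (hY0 : Measurable Y0) (hY2 : Measurable Y2) (hD1 : Measurable D1) (hD2 : Measurable D2)
    (hS : Measurable S) (hY0i : Integrable Y0 P) (hY2i : Integrable Y2 P)
    (hSv : ∀ ω, S ω = 0 ∨ S ω = 1) (Y0p Y2p : ℝ × ℝ → Ω → ℝ)
    (hY0p : Integrable (Y0p (0, 0)) P) (hY2p : Integrable (Y2p (0, 0)) P)
    (hcons0 : ∀ ω, Y0 ω = Y0p (D1 ω, D2 ω) ω) (hcons2 : ∀ ω, Y2 ω = Y2p (D1 ω, D2 ω) ω)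
    (d : ℝ × ℝ) (hd2 : d.2 ∈ ({0, 1} : Set ℝ)) (hDIDd : DID P X D1 D2 Y0p Y2p d)
    (hDIDd' : DID P X D1 D2 Y0p Y2p (0, 0)) (q : ℝ → 𝓧 → ℝ)
    (hMAR : MAR P X D1 D2 S Y0 Y2 q) (pd' : 𝓧 → ℝ)
    (hpd' : IsCondMeanGiven P X univ (ind (evD D1 D2 (0, 0))) pd')
    (hpd'pos : ∀ᵐ ω ∂P, 0 < pd' (X ω))
    (hdS1 : 0 < P (evD D1 D2 d ∩ {ω | S ω = 1}))
    (g : 𝓧 → ℝ)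
    (hg : IsCondMeanGiven P X (evD D1 D2 d) (fun ω => Y2p d ω - Y2p (0, 0) ω) g)
    (mS mS' : 𝓧 → ℝ)
    (hmS : IsCondMeanGiven P X (evD D1 D2 d ∩ {ω | S ω = 1}) (fun ω => Y2 ω - Y0 ω) mS)
    (hmS' : IsCondMeanGiven P X (evD D1 D2 (0, 0) ∩ {ω | S ω = 1}) (fun ω => Y2 ω - Y0 ω) mS') :
    (∫ ω, S ω * ind (evD D1 D2 d) ω ∂P)⁻¹
        * ∫ ω, S ω * ind (evD D1 D2 d) ω * (mS (X ω) - mS' (X ω)) ∂P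
      = tau P D1 D2 Y2p d
        + (P (evD D1 D2 d ∩ {ω | S ω = 0})).toReal / (P (evD D1 D2 d)).toReal
          * ((P (evD D1 D2 d ∩ {ω | S ω = 1})).toReal⁻¹
                * ∫ ω in evD D1 D2 d ∩ {ω | S ω = 1}, g (X ω) ∂P
              - (P (evD D1 D2 d ∩ {ω | S ω = 0})).toReal⁻¹
                * ∫ ω in evD D1 D2 d ∩ {ω | S ω = 0}, g (X ω) ∂P) := by
  obtain ⟨tr, htr, -⟩ := hDIDd.2
  have hzero : IsCondMeanGiven P X (evD D1 D2 (0, 0))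
      (fun ω => Y2p (0, 0) ω - Y2p (0, 0) ω) 0 :=
    ⟨measurable_zero, fun _ _ _ => by simp only [sub_self, Pi.zero_apply]⟩
  have htreated := ae_completeCase_condMean_eq hX hY0 hY2 hD1 hD2 hS hSv hY0i hY2i hcons0 hcons2
    hY0p hY2p hd2 hDIDd hMAR htr hg hmS
  have hcontrol := ae_completeCase_condMean_eq hX hY0 hY2 hD1 hD2 hS hSv hY0i hY2i hcons0 hcons2
    hY0p hY2p (by simp) hDIDd' hMAR htr hzero hmS'
  simp only [Pi.zero_apply, add_zero] at hcontrol
  have hcontrol_all : ∀ᵐ ω ∂P, mS' (X ω) = tr (X ω) :=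
    hMAR.ae_of_ae_completeCase hX hD1 hD2 hS hSv (by simp) hpd' hpd'pos
      (measurableSet_eq_fun hmS'.1 htr.1) hcontrol
  have hcontrast : ∀ᵐ ω ∂P.restrict (evD D1 D2 d ∩ {ω | S ω = 1}),
      mS (X ω) - mS' (X ω) = g (X ω) := by
    filter_upwards [htreated, ae_restrict_of_ae hcontrol_all] with ω h h'
    rw [h, h', add_sub_cancel_left]
  have hA : MeasurableSet (evD D1 D2 d) := measurableSet_evD hD1 hD2
  have hY2d : IntegrableOn (Y2p d) (evD D1 D2 d) P :=
    hY2i.integrableOn.congr_fun (eqOn_evD_of_consistency hcons2) hA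
  rw [inv_mul_completeCase_integral hS hSv hA, average_congr hcontrast]
  simpa only [setAverage_eq, smul_eq_mul, measureReal_def] using
    completeCase_setAverage_eq_tau_add hX hD1 hD2 hS hSv (hY2d.sub hY2p.integrableOn) hdS1 hg

/-- Proposition 2: bias of the complete-case DID estimand. -/
theorem statement_1
    [MeasurableSpace Ω] [m𝓧 : MeasurableSpace 𝓧]
    (P : Measure Ω) [IsProbabilityMeasure P]
    (X : Ω → 𝓧) (hX : Measurable X)
    (Y0 Y2 D1 D2 S : Ω → ℝ)
    (hY0 : Measurable Y0) (hY2 : Measurable Y2)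
    (hD1 : Measurable D1) (hD2 : Measurable D2) (hS : Measurable S)
    (hY0i : Integrable Y0 P) (hY2i : Integrable Y2 P)
    (hD1v : ∀ ω, D1 ω = 0 ∨ D1 ω = 1) (hD2v : ∀ ω, D2 ω = 0 ∨ D2 ω = 1)
    (hSv : ∀ ω, S ω = 0 ∨ S ω = 1)
    (Y0p Y2p : ℝ × ℝ → Ω → ℝ)
    (hY0p : ∀ e ∈ allPaths, Measurable (Y0p e) ∧ Integrable (Y0p e) P)
    (hY2p : ∀ e ∈ allPaths, Measurable (Y2p e) ∧ Integrable (Y2p e) P)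
    (hcons0 : ∀ ω, Y0 ω = Y0p (D1 ω, D2 ω) ω)
    (hcons2 : ∀ ω, Y2 ω = Y2p (D1 ω, D2 ω) ω)
    (d : ℝ × ℝ) (hd : d ∈ threePaths)
    (hDIDd : DID P X D1 D2 Y0p Y2p d) (hDIDd' : DID P X D1 D2 Y0p Y2p (0, 0))
    (q : ℝ → 𝓧 → ℝ) (hMAR : MAR P X D1 D2 S Y0 Y2 q)
    (pd pd' : 𝓧 → ℝ)
    (hpd : IsCondMeanGiven P X Set.univ (ind (evD D1 D2 d)) pd)
    (hpd' : IsCondMeanGiven P X Set.univ (ind (evD D1 D2 (0, 0))) pd')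
    (hpdpos : ∀ᵐ ω ∂P, 0 < pd (X ω)) (hpd'pos : ∀ᵐ ω ∂P, 0 < pd' (X ω))
    (hdS1 : 0 < P (evD D1 D2 d ∩ {ω | S ω = 1}))
    (hdS0 : 0 < P (evD D1 D2 d ∩ {ω | S ω = 0}))
    (hd'S1 : 0 < P (evD D1 D2 (0, 0) ∩ {ω | S ω = 1}))
    (g : 𝓧 → ℝ)
    (hg : IsCondMeanGiven P X (evD D1 D2 d) (fun ω => Y2p d ω - Y2p (0, 0) ω) g)
    (mS mS' : 𝓧 → ℝ)
    (hmS : IsCondMeanGiven P X (evD D1 D2 d ∩ {ω | S ω = 1}) (fun ω => Y2 ω - Y0 ω) mS)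
    (hmS' : IsCondMeanGiven P X (evD D1 D2 (0, 0) ∩ {ω | S ω = 1}) (fun ω => Y2 ω - Y0 ω) mS')
    (hfin1 : Integrable (fun ω => S ω * ind (evD D1 D2 d) ω * (mS (X ω) - mS' (X ω))) P)
    (hfin2 : Integrable (fun ω => g (X ω)) P) :
    (∫ ω, S ω * ind (evD D1 D2 d) ω ∂P)⁻¹
        * ∫ ω, S ω * ind (evD D1 D2 d) ω * (mS (X ω) - mS' (X ω)) ∂P
      = tau P D1 D2 Y2p d
        + (P (evD D1 D2 d ∩ {ω | S ω = 0})).toReal / (P (evD D1 D2 d)).toReal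
          * ((P (evD D1 D2 d ∩ {ω | S ω = 1})).toReal⁻¹
                * ∫ ω in evD D1 D2 d ∩ {ω | S ω = 1}, g (X ω) ∂P
              - (P (evD D1 D2 d ∩ {ω | S ω = 0})).toReal⁻¹
                * ∫ ω in evD D1 D2 d ∩ {ω | S ω = 0}, g (X ω) ∂P) :=
  statement_1_general P X hX Y0 Y2 D1 D2 S hY0 hY2 hD1 hD2 hS hY0i hY2i hSv Y0p Y2p
    (hY0p (0, 0) (by simp [allPaths])).2 (hY2p (0, 0) (by simp [allPaths])).2 hcons0 hcons2 d
    (by rcases hd with rfl | rfl | rfl <;> simp) hDIDd hDIDd' q hMAR pd' hpd' hpd'pos hdS1 g hg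
    mS mS' hmS hmS'

end DIDMissing
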